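/- arXiv:2107.06506 — 2 statements merged into one kernel-verified Lean document; each statement's English description precedes it below -/
import Mathlib

section
/- For all real numbers δ₁, d, T with 0 ≤ δ₁ ≤ d < 9/2 and T ≥ 5/7, one has 0 < E(T, δ₁) ≤ E(T, d). -/
open Real

/-- The function `E(T,d)` of Bennett–Martin–O'Bryant–Rechnitzer. -/
noncomputable def Efun (T d : ℝ) : ℝ :=
  (2 * T / 3) / ((2 * d + 17) ^ 2 + 4 * T ^ 2)
    + (2 * T / 3) / ((-2 * d + 17) ^ 2 + 4 * T ^ 2)
    - (4 * T / 3) / (17 ^ 2 + 4 * T ^ 2)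
    + (T / 2) * Real.log (1 + 17 ^ 2 / (4 * T ^ 2))
    - (T / 4) * Real.log (1 + (2 * d + 17) ^ 2 / (4 * T ^ 2))
    - (T / 4) * Real.log (1 + (-2 * d + 17) ^ 2 / (4 * T ^ 2))
    + ((8 + 6 * π) / 45) / ((2 * d + 17) ^ 2 + 4 * T ^ 2) ^ ((3 : ℝ) / 2)
    + ((8 + 6 * π) / 45) / ((-2 * d + 17) ^ 2 + 4 * T ^ 2) ^ ((3 : ℝ) / 2)
    + (2 * (8 + 6 * π) / 45) / (17 ^ 2 + 4 * T ^ 2) ^ ((3 : ℝ) / 2)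
    + ∑ k ∈ Finset.range 4,
        (2 * Real.arctan ((1 + 4 * (k : ℝ)) / (2 * T))
          - Real.arctan ((2 * d + 1 + 4 * (k : ℝ)) / (2 * T))
          - Real.arctan ((-2 * d + 1 + 4 * (k : ℝ)) / (2 * T)))
    + ((2 * d + 15) / 4) * Real.arctan ((2 * d + 17) / (2 * T))
    + ((-2 * d + 15) / 4) * Real.arctan ((-2 * d + 17) / (2 * T))
    - (15 / 2) * Real.arctan (17 / (2 * T))

/-!
`E(T, d)` comes from Stirling's formula for `log Γ` at the points `(17 ± 2d) / 4 + iT / 2`, which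
are reached from `(1 ± 2d) / 4 + iT / 2` by four steps of the functional equation. Each part of it
therefore has the form `F (a + x) + F (a - x)` with `x = 2d`, up to constants, and such a function
increases in `x` as soon as `F' (a - x) ≤ F' (a + x)`.

For `F = -arctan (· / 2T)` this compares two denominators. For the Stirling part, with
`Q s = s² + 4T²`, one has `F' s = arctan (s / 2T) / 4 - T / Q s - s / Q s * w (Q s)` where `w` is
positive and decreasing. If `0 ≤ m ≤ p`, `A = Q m` and `B = Q p`, then `T / A - T / B` equals
`(p - m) / (A B) * T (p + m)`, whereas `p / B * w B - m / A * w A` is at most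
`(p - m) / (A B) * 4T² w B`, which is smaller because `4T² ≤ B` and `p + m = 34`.

At `d = 0` everything cancels except the error terms, which add up to a positive number.
-/

/-- The even part of `x ↦ F (a + x)`, doubled. -/
def symmSum (F : ℝ → ℝ) (a x : ℝ) : ℝ := F (a + x) + F (a - x)

/-- Minus the Stirling approximation to `Im log Γ (s / 4 + iT / 2)`, up to terms affine in `s`,
together with an error term of size `c / |s + 2iT|³`. -/
noncomputable def stirlingTerm (c T s : ℝ) : ℝ :=
  (2 * T / 3) / (s ^ 2 + 4 * T ^ 2) - (T / 4) * log (1 + s ^ 2 / (4 * T ^ 2))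
    + c / (s ^ 2 + 4 * T ^ 2) ^ ((3 : ℝ) / 2) + ((s - 2) / 4) * arctan (s / (2 * T))

/-- The weight `w (Q)` of `s / Q`, where `Q = s ^ 2 + 4 * T ^ 2`, in the derivative of
`stirlingTerm c T`. -/
noncomputable def stirlingWeight (c T Q : ℝ) : ℝ :=
  (4 * T / 3) / Q + 3 * c / Q ^ ((3 : ℝ) / 2)

/-- The derivative of `stirlingTerm c T`, arranged by powers of `s ^ 2 + 4 * T ^ 2`. -/
noncomputable def stirlingTermDeriv (c T s : ℝ) : ℝ :=
  arctan (s / (2 * T)) / 4 - T / (s ^ 2 + 4 * T ^ 2)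
    - s / (s ^ 2 + 4 * T ^ 2) * stirlingWeight c T (s ^ 2 + 4 * T ^ 2)

theorem monotoneOn_symmSum {F F' : ℝ → ℝ} {a r : ℝ}
    (hF : ∀ s ∈ Set.Icc (a - r) (a + r), HasDerivAt F (F' s) s)
    (hF' : ∀ x ∈ Set.Ioo 0 r, F' (a - x) ≤ F' (a + x)) :
    MonotoneOn (symmSum F a) (Set.Icc 0 r) := by
  have hderiv : ∀ x ∈ Set.Icc 0 r, HasDerivAt (symmSum F a) (F' (a + x) - F' (a - x)) x := by
    intro x ⟨hx0, hxr⟩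
    have hplus := (hF (a + x) ⟨by linarith, by linarith⟩).comp_const_add a x
    have hminus := (hF (a - x) ⟨by linarith, by linarith⟩).comp_const_sub a x
    exact (hplus.add hminus).congr_deriv (sub_eq_add_neg _ _).symm
  refine monotoneOn_of_hasDerivWithinAt_nonneg (convex_Icc 0 r)
    (fun x hx => (hderiv x hx).continuousAt.continuousWithinAt)
    (fun x hx => (hderiv x (interior_subset hx)).hasDerivWithinAt) fun x hx => ?_
  rw [interior_Icc] at hx
  exact sub_nonneg.2 (hF' x hx)

theorem div_sq_add_sub_div_sq_add_le {K m p : ℝ} (hK : 0 < K) (hm : 0 ≤ m) (hmp : m ≤ p) :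
    p / (p ^ 2 + K) - m / (m ^ 2 + K) ≤ (p - m) / ((m ^ 2 + K) * (p ^ 2 + K)) * K := by
  have heq : p / (p ^ 2 + K) - m / (m ^ 2 + K)
      = (p - m) / ((m ^ 2 + K) * (p ^ 2 + K)) * (K - p * m) := by
    field_simp
    ring
  rw [heq]
  have hgap : 0 ≤ (p - m) / ((m ^ 2 + K) * (p ^ 2 + K)) :=
    div_nonneg (sub_nonneg.2 hmp) (by positivity)
  exact mul_le_mul_of_nonneg_left (sub_le_self K (mul_nonneg (hm.trans hmp) hm)) hgap

section

variable {T : ℝ}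

theorem hasDerivAt_arctan_div_two_mul (hT : T ≠ 0) (s : ℝ) :
    HasDerivAt (fun s => arctan (s / (2 * T))) (2 * T / (s ^ 2 + 4 * T ^ 2)) s := by
  refine ((hasDerivAt_id s).div_const (2 * T)).arctan.congr_deriv ?_
  simp only [id_eq]
  field_simp
  ring

theorem hasDerivAt_log_one_add_sq_div (hT : T ≠ 0) (s : ℝ) :
    HasDerivAt (fun s => log (1 + s ^ 2 / (4 * T ^ 2))) (2 * s / (s ^ 2 + 4 * T ^ 2)) s := by
  have hinner : HasDerivAt (fun s : ℝ => 1 + s ^ 2 / (4 * T ^ 2)) (2 * s / (4 * T ^ 2)) s := by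
    simpa using ((hasDerivAt_pow 2 s).div_const (4 * T ^ 2)).const_add 1
  refine (hinner.log (by positivity)).congr_deriv ?_
  field_simp
  ring

theorem hasDerivAt_const_div_sq_add_rpow (hT : T ≠ 0) (c q s : ℝ) :
    HasDerivAt (fun s => c / (s ^ 2 + 4 * T ^ 2) ^ q)
      (-(s / (s ^ 2 + 4 * T ^ 2) * (2 * q * c / (s ^ 2 + 4 * T ^ 2) ^ q))) s := by
  have hQ : 0 < s ^ 2 + 4 * T ^ 2 := by positivity
  have hinner : HasDerivAt (fun s : ℝ => s ^ 2 + 4 * T ^ 2) (2 * s) s := by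
    simpa using (hasDerivAt_pow 2 s).add_const (4 * T ^ 2)
  have hpow := hinner.rpow_const (p := q) (Or.inl hQ.ne')
  refine ((hasDerivAt_const s c).div hpow (rpow_pos_of_pos hQ q).ne').congr_deriv ?_
  rw [rpow_sub_one hQ.ne']
  field_simp
  ring

theorem hasDerivAt_stirlingTerm (hT : T ≠ 0) (c s : ℝ) :
    HasDerivAt (stirlingTerm c T) (stirlingTermDeriv c T s) s := by
  have hmain := hasDerivAt_const_div_sq_add_rpow hT (2 * T / 3) 1 s
  simp only [rpow_one] at hmain
  have hlog := (hasDerivAt_log_one_add_sq_div hT s).const_mul (T / 4)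
  have herror := hasDerivAt_const_div_sq_add_rpow hT c (3 / 2) s
  have harctan := (((hasDerivAt_id s).sub_const 2).div_const 4).mul
    (hasDerivAt_arctan_div_two_mul hT s)
  refine (((hmain.sub hlog).add herror).add harctan).congr_deriv ?_
  simp only [stirlingTermDeriv, stirlingWeight, id_eq]
  field_simp
  ring

theorem antitoneOn_stirlingWeight (hT : 0 ≤ T) {c : ℝ} (hc : 0 ≤ c) :
    AntitoneOn (stirlingWeight c T) (Set.Ioi 0) := by
  intro A (hA : 0 < A) B _ hAB
  unfold stirlingWeight
  gcongr

theorem mul_stirlingWeight_le (hT : 0 < T) {c Q : ℝ} (hc : c ≤ 1) (hQ : 4 ≤ Q)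
    (hTQ : 4 * T ^ 2 ≤ Q) :
    4 * T ^ 2 * stirlingWeight c T Q ≤ 4 * T := by
  have hQ0 : 0 < Q := by linarith
  have hsqrt : 2 * T ≤ √Q := le_sqrt_of_sq_le (by linarith)
  have hpow : Q ^ ((3 : ℝ) / 2) = Q * √Q := by
    rw [sqrt_eq_rpow, ← rpow_one_add' hQ0.le (by norm_num)]
    norm_num
  have hmain : 4 * T ^ 2 * ((4 * T / 3) / Q) ≤ 4 * T / 3 := by
    rw [← mul_div_assoc, div_le_iff₀ hQ0, mul_comm]
    gcongr
  have herror : 4 * T ^ 2 * (3 * c / Q ^ ((3 : ℝ) / 2)) ≤ 3 * T / 2 := by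
    rw [hpow, ← mul_div_assoc, div_le_iff₀ (by positivity)]
    calc 4 * T ^ 2 * (3 * c) ≤ 4 * T ^ 2 * (3 * 1) := by gcongr
      _ = 3 * T / 2 * (4 * (2 * T)) := by ring
      _ ≤ 3 * T / 2 * (Q * √Q) := by gcongr
  rw [stirlingWeight, mul_add]
  linarith

theorem div_mul_stirlingWeight_sub_le (hT : 0 < T) {c m p : ℝ} (hc0 : 0 ≤ c) (hc1 : c ≤ 1)
    (hm : 0 ≤ m) (hmp : m ≤ p) (hsum : 4 ≤ p + m) :
    p / (p ^ 2 + 4 * T ^ 2) * stirlingWeight c T (p ^ 2 + 4 * T ^ 2)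
        - m / (m ^ 2 + 4 * T ^ 2) * stirlingWeight c T (m ^ 2 + 4 * T ^ 2)
      ≤ T / (m ^ 2 + 4 * T ^ 2) - T / (p ^ 2 + 4 * T ^ 2) := by
  have hkernel := div_sq_add_sub_div_sq_add_le (K := 4 * T ^ 2) (by positivity) hm hmp
  set A := m ^ 2 + 4 * T ^ 2 with hA_def
  set B := p ^ 2 + 4 * T ^ 2 with hB_def
  have hA : 0 < A := by positivity
  have hB : 0 < B := by positivity
  have hAB : A ≤ B := by rw [hA_def, hB_def]; gcongr
  have hB4 : 4 ≤ B := by nlinarith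
  have hBT : 4 * T ^ 2 ≤ B := le_add_of_nonneg_left (sq_nonneg p)
  have hw : 0 ≤ stirlingWeight c T B := by unfold stirlingWeight; positivity
  have hgap : 0 ≤ (p - m) / (A * B) := div_nonneg (sub_nonneg.2 hmp) (by positivity)
  calc p / B * stirlingWeight c T B - m / A * stirlingWeight c T A
      ≤ p / B * stirlingWeight c T B - m / A * stirlingWeight c T B := by
        gcongr
        exact antitoneOn_stirlingWeight hT.le hc0 hA hB hAB
    _ = (p / B - m / A) * stirlingWeight c T B := by ring
    _ ≤ (p - m) / (A * B) * (4 * T ^ 2) * stirlingWeight c T B := by gcongr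
    _ = (p - m) / (A * B) * (4 * T ^ 2 * stirlingWeight c T B) := by ring
    _ ≤ (p - m) / (A * B) * (4 * T) :=
        mul_le_mul_of_nonneg_left (mul_stirlingWeight_le hT hc1 hB4 hBT) hgap
    _ ≤ (p - m) / (A * B) * ((p + m) * T) := by gcongr
    _ = T * (B - A) / (A * B) := by rw [hA_def, hB_def]; ring
    _ = T / A - T / B := by field_simp

theorem stirlingTermDeriv_le (hT : 0 < T) {c m p : ℝ} (hc0 : 0 ≤ c) (hc1 : c ≤ 1) (hm : 0 ≤ m)
    (hmp : m ≤ p) (hsum : 4 ≤ p + m) : stirlingTermDeriv c T m ≤ stirlingTermDeriv c T p := by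
  have harctan : arctan (m / (2 * T)) ≤ arctan (p / (2 * T)) := arctan_mono (by gcongr)
  have hrational := div_mul_stirlingWeight_sub_le hT hc0 hc1 hm hmp hsum
  unfold stirlingTermDeriv
  linarith

theorem monotoneOn_symmSum_stirlingTerm (hT : 0 < T) {a c : ℝ} (ha : 2 ≤ a) (hc0 : 0 ≤ c)
    (hc1 : c ≤ 1) :
    MonotoneOn (symmSum (stirlingTerm c T) a) (Set.Icc 0 a) :=
  monotoneOn_symmSum (fun s _ => hasDerivAt_stirlingTerm hT.ne' c s) fun x ⟨hx0, hxa⟩ =>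
    stirlingTermDeriv_le hT hc0 hc1 (by linarith) (by linarith) (by linarith)

theorem antitoneOn_symmSum_arctan (hT : 0 < T) {a : ℝ} (ha : 0 ≤ a) :
    AntitoneOn (symmSum (fun s => arctan (s / (2 * T))) a) (Set.Ici 0) := by
  intro x (hx : 0 ≤ x) y (hy : 0 ≤ y) hxy
  have hneg := monotoneOn_symmSum (a := a) (r := y)
    (fun s _ => (hasDerivAt_arctan_div_two_mul hT.ne' s).neg) fun x ⟨hx0, _⟩ => by
      have hsq : (a - x) ^ 2 ≤ (a + x) ^ 2 := by nlinarith
      gcongr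
  have hle := hneg ⟨hx, hxy⟩ ⟨hy, le_rfl⟩ hxy
  simp only [symmSum, Pi.neg_apply] at hle ⊢
  linarith

end

/-- The numerator of the error terms of `Efun`. -/
noncomputable def stirlingErrorConst : ℝ := (8 + 6 * π) / 45

theorem stirlingErrorConst_pos : 0 < stirlingErrorConst := by
  unfold stirlingErrorConst
  positivity

theorem stirlingErrorConst_le_one : stirlingErrorConst ≤ 1 := by
  unfold stirlingErrorConst
  linarith [pi_lt_four]

-- The error terms at `17` are added rather than subtracted, hence the opposite constant there.
theorem Efun_eq_symmSum (T d : ℝ) :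
    Efun T d = symmSum (stirlingTerm stirlingErrorConst T) 17 (2 * d)
      - 2 * stirlingTerm (-stirlingErrorConst) T 17
      + ∑ k ∈ Finset.range 4, (2 * arctan ((1 + 4 * (k : ℝ)) / (2 * T))
          - symmSum (fun s => arctan (s / (2 * T))) (1 + 4 * (k : ℝ)) (2 * d)) := by
  have hsum : ∀ k : ℕ, symmSum (fun s => arctan (s / (2 * T))) (1 + 4 * (k : ℝ)) (2 * d)
      = arctan ((2 * d + 1 + 4 * (k : ℝ)) / (2 * T))
        + arctan ((-2 * d + 1 + 4 * (k : ℝ)) / (2 * T)) := by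
    intro k
    unfold symmSum
    ring_nf
  simp only [hsum]
  simp only [Efun, symmSum, stirlingTerm, stirlingErrorConst, ← sub_sub,
    show 2 * d + 17 = 17 + 2 * d by ring, show -2 * d + 17 = 17 - 2 * d by ring]
  ring

theorem Efun_zero_right (T : ℝ) :
    Efun T 0 = 4 * stirlingErrorConst / (17 ^ 2 + 4 * T ^ 2) ^ ((3 : ℝ) / 2) := by
  rw [Efun_eq_symmSum]
  simp only [symmSum, stirlingTerm, mul_zero, add_zero, sub_zero, ← two_mul, sub_self,
    Finset.sum_const_zero]
  ring

theorem Efun_zero_right_pos (T : ℝ) : 0 < Efun T 0 := by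
  have := stirlingErrorConst_pos
  rw [Efun_zero_right]
  positivity

theorem monotoneOn_Efun {T : ℝ} (hT : 0 < T) : MonotoneOn (Efun T) (Set.Icc 0 (17 / 2)) := by
  intro x ⟨hx0, hx⟩ y ⟨hy0, hy⟩ hxy
  have hx' : 2 * x ∈ Set.Icc (0 : ℝ) 17 := ⟨by linarith, by linarith⟩
  have hy' : 2 * y ∈ Set.Icc (0 : ℝ) 17 := ⟨by linarith, by linarith⟩
  have hxy' : 2 * x ≤ 2 * y := by linarith
  simp only [Efun_eq_symmSum]
  gcongr ?_ - _ + ∑ k ∈ _, (_ - ?_) with k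
  · exact monotoneOn_symmSum_stirlingTerm hT (by norm_num) stirlingErrorConst_pos.le
      stirlingErrorConst_le_one hx' hy' hxy'
  · exact antitoneOn_symmSum_arctan hT (by positivity) hx'.1 hy'.1 hxy'

theorem stmt_3_general {δ₁ d T : ℝ} (h0 : 0 ≤ δ₁) (h1 : δ₁ ≤ d) (h2 : d ≤ 17 / 2)
    (hT : 0 < T) : 0 < Efun T δ₁ ∧ Efun T δ₁ ≤ Efun T d := by
  have hzero : (0 : ℝ) ∈ Set.Icc (0 : ℝ) (17 / 2) := by norm_num
  have hδ₁ : δ₁ ∈ Set.Icc (0 : ℝ) (17 / 2) := ⟨h0, h1.trans h2⟩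
  have hd : d ∈ Set.Icc (0 : ℝ) (17 / 2) := ⟨h0.trans h1, h2⟩
  exact ⟨(Efun_zero_right_pos T).trans_le (monotoneOn_Efun hT hzero hδ₁ h0),
    monotoneOn_Efun hT hδ₁ hd h1⟩

theorem stmt_3 (δ₁ d T : ℝ) (h0 : 0 ≤ δ₁) (h1 : δ₁ ≤ d) (h2 : d < 9 / 2)
    (hT : 5 / 7 ≤ T) : 0 < Efun T δ₁ ∧ Efun T δ₁ ≤ Efun T d :=
  stmt_3_general h0 h1 (by linarith) (by linarith)
end

section
/- Let a, b ∈ {0, 1}, let k be a positive integer, and let s be a complex number that is not an integer. Then Γ(a/2 + (1−s)/2) / Γ(a/2 + s/2) = (Γ(b/2 + (1−(s+k))/2) / Γ(b/2 + (s+k)/2)) · 2^{−k} · (∏_{j=1}^{k} (s + j − 1)) · sin((π/2)(s + k + 1 − b)) / sin((π/2)(s + 1 − a)). -/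
open Complex Real

/-!
For `a ∈ {0, 1}` the numbers `(a + s) / 2` and `(s + 1 - a) / 2` are `s / 2` and `(s + 1) / 2` in
some order, so the product of their Gamma values is given by Legendre's duplication formula, while
`(s + 1 - a) / 2` and `(a + 1 - s) / 2` add up to `1`, so that Euler's reflection formula applies.
Together they give
`Γ((a + 1 - s) / 2) / Γ((a + s) / 2) * sin (π (s + 1 - a) / 2) = √π 2 ^ (s - 1) / Γ(s)`,
whose right-hand side does not involve `a`. Comparing this with the same formula at `(b, s + k)`
leaves the quotient `Γ(s + k) / Γ(s)`, which is the product `s (s + 1) ⋯ (s + k - 1)`.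
-/

theorem ascPochhammer_eval_eq_prod_Icc {R : Type*} [CommRing R] (k : ℕ) (x : R) :
    (ascPochhammer R k).eval x = ∏ j ∈ Finset.Icc 1 k, (x + (j : R) - 1) := by
  induction k with
  | zero => simp
  | succ k ih =>
    rw [ascPochhammer_succ_eval, Finset.prod_Icc_succ_top (by lia), ih]
    push_cast
    ring

theorem sin_pi_div_two_mul_ne_zero {z : ℂ} (hz : z ∈ integerComplement) :
    Complex.sin (π / 2 * z) ≠ 0 := by
  intro hsin
  have double_angle : Complex.sin (π * z) =
      2 * Complex.sin (π / 2 * z) * Complex.cos (π / 2 * z) := by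
    rw [← Complex.sin_two_mul]
    ring_nf
  exact sin_pi_mul_ne_zero hz (by rw [double_angle, hsin, mul_zero, zero_mul])

theorem Gamma_half_reflection (a s : ℂ) :
    Complex.Gamma (a / 2 + (1 - s) / 2) * Complex.Gamma ((s + 1 - a) / 2) =
      π / Complex.sin (π / 2 * (s + 1 - a)) := by
  have hadd : a / 2 + (1 - s) / 2 = 1 - (s + 1 - a) / 2 := by ring
  have hangle : (π : ℂ) / 2 * (s + 1 - a) = π * ((s + 1 - a) / 2) := by ring
  rw [hadd, hangle, mul_comm, Complex.Gamma_mul_Gamma_one_sub]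

section ZeroOrOne

variable {a s : ℂ}

theorem Gamma_half_duplication (ha : a = 0 ∨ a = 1) :
    Complex.Gamma (a / 2 + s / 2) * Complex.Gamma ((s + 1 - a) / 2) =
      Complex.Gamma s * 2 ^ (1 - s) * √π := by
  have duplication : Complex.Gamma (s / 2) * Complex.Gamma (s / 2 + 1 / 2) =
      Complex.Gamma s * 2 ^ (1 - s) * √π := by
    simpa only [mul_div_cancel₀ s two_ne_zero] using Complex.Gamma_mul_Gamma_add_half (s / 2)
  rw [← duplication]
  rcases ha with rfl | rfl
  · ring_nf
  · ring_nf

theorem Gamma_div_Gamma_mul_sin (ha : a = 0 ∨ a = 1)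
    (hsin : Complex.sin (π / 2 * (s + 1 - a)) ≠ 0) :
    Complex.Gamma (a / 2 + (1 - s) / 2) / Complex.Gamma (a / 2 + s / 2) *
        Complex.sin (π / 2 * (s + 1 - a)) =
      √π * 2 ^ (s - 1) / Complex.Gamma s := by
  have reflection := Gamma_half_reflection a s
  have hpi : (π : ℂ) ≠ 0 := ofReal_ne_zero.mpr Real.pi_ne_zero
  have hGamma : Complex.Gamma ((s + 1 - a) / 2) ≠ 0 :=
    right_ne_zero_of_mul (reflection.trans_ne (div_ne_zero hpi hsin))
  have hsqrt : (√π : ℂ) * √π = π := mod_cast Real.mul_self_sqrt Real.pi_pos.le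
  have htwo : (2 : ℂ) ^ (1 - s) = (2 ^ (s - 1))⁻¹ := by rw [← cpow_neg, neg_sub]
  rw [← mul_div_mul_right _ _ hGamma, reflection, Gamma_half_duplication ha,
    div_right_comm, div_mul_cancel₀ _ hsin, ← hsqrt, htwo]
  field_simp

theorem add_one_sub_mem_integerComplement (ha : a = 0 ∨ a = 1) (hs : s ∈ integerComplement) :
    s + 1 - a ∈ integerComplement := by
  rcases ha with rfl | rfl
  · simpa using (add_intCast_mem_integerComplement 1).mpr hs
  · simpa using hs

end ZeroOrOne

theorem stmt_12_general {a b : ℂ} (ha : a = 0 ∨ a = 1) (hb : b = 0 ∨ b = 1) (k : ℕ) {s : ℂ}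
    (hs : ∀ m : ℕ, s ≠ -m) (hsin_a : Complex.sin (π / 2 * (s + 1 - a)) ≠ 0)
    (hsin_b : Complex.sin (π / 2 * (s + k + 1 - b)) ≠ 0) :
    Complex.Gamma (a / 2 + (1 - s) / 2) / Complex.Gamma (a / 2 + s / 2) =
      Complex.Gamma (b / 2 + (1 - (s + k)) / 2) / Complex.Gamma (b / 2 + (s + k) / 2) *
        (2 : ℂ) ^ (-(k : ℤ)) *
        (∏ j ∈ Finset.Icc 1 k, (s + (j : ℂ) - 1)) *
        Complex.sin (π / 2 * (s + k + 1 - b)) /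
        Complex.sin (π / 2 * (s + 1 - a)) := by
  have hGamma_add : Complex.Gamma (s + k) ≠ 0 := Complex.Gamma_ne_zero fun m hm ↦
    hs (m + k) (by push_cast; linear_combination hm)
  have hpow : (2 : ℂ) ^ (s + k - 1) = 2 ^ (s - 1) * 2 ^ k := by
    rw [add_sub_right_comm, cpow_add _ _ two_ne_zero, cpow_natCast]
  have hprod : Complex.Gamma (s + k) / Complex.Gamma s =
      ∏ j ∈ Finset.Icc 1 k, (s + (j : ℂ) - 1) := by
    rw [Complex.Gamma_add_nat_div_Gamma_eq s hs, ascPochhammer_eval_eq_prod_Icc]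
  rw [eq_div_iff hsin_a, Gamma_div_Gamma_mul_sin ha hsin_a, ← hprod, mul_assoc _ (2 ^ _),
    mul_right_comm, Gamma_div_Gamma_mul_sin hb hsin_b, hpow, zpow_neg, zpow_natCast]
  field_simp

theorem stmt_12 (a b : ℝ) (ha : a = 0 ∨ a = 1) (hb : b = 0 ∨ b = 1)
    (k : ℕ) (hk : 0 < k) (s : ℂ) (hs : ∀ n : ℤ, s ≠ (n : ℂ)) :
    Complex.Gamma ((a : ℂ) / 2 + (1 - s) / 2) / Complex.Gamma ((a : ℂ) / 2 + s / 2) =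
      Complex.Gamma ((b : ℂ) / 2 + (1 - (s + k)) / 2) /
          Complex.Gamma ((b : ℂ) / 2 + (s + k) / 2) *
        (2 : ℂ) ^ (-(k : ℤ)) *
        (∏ j ∈ Finset.Icc 1 k, (s + (j : ℂ) - 1)) *
        Complex.sin ((π : ℂ) / 2 * (s + k + 1 - b)) /
        Complex.sin ((π : ℂ) / 2 * (s + 1 - a)) := by
  have ha' : (a : ℂ) = 0 ∨ (a : ℂ) = 1 := mod_cast ha
  have hb' : (b : ℂ) = 0 ∨ (b : ℂ) = 1 := mod_cast hb
  have hs_mem : s ∈ integerComplement := fun ⟨n, hn⟩ ↦ hs n hn.symm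
  have hsk_mem : s + k ∈ integerComplement := (add_intCast_mem_integerComplement k).mpr hs_mem
  exact stmt_12_general ha' hb' k (fun m ↦ mod_cast hs (-m))
    (sin_pi_div_two_mul_ne_zero (add_one_sub_mem_integerComplement ha' hs_mem))
    (sin_pi_div_two_mul_ne_zero (add_one_sub_mem_integerComplement hb' hsk_mem))
end
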